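/- There exists an injective group homomorphism from Thompson's group V (the group of prefix replacement permutations of the Cantor set C = ℕ → Bool) into the group QAut(T_{2,c}) of quasi-automorphisms of the infinite binary 2-edge-colored tree. -/

import Mathlib

/-- The Cantor set `C = ℕ → Bool`. -/
abbrev Cantor : Type := ℕ → Bool

/-- Prepend a finite word `a` to an element `ξ` of the Cantor set. -/
def prepend (a : List Bool) (ξ : Cantor) : Cantor :=
  fun n => if h : n < a.length then a.get ⟨n, h⟩ else ξ (n - a.length)

/-- A finite set of finite binary words is a complete antichain if distinct elements
are incomparable in the prefix order and every `ξ : ℕ → Bool` has an initial segment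
lying in it. -/
def IsCompleteAntichain (A : Set (List Bool)) : Prop :=
  A.Finite ∧
  (∀ a ∈ A, ∀ b ∈ A, a ≠ b → ¬ a <+: b) ∧
  (∀ ξ : Cantor, ∃ n : ℕ, (List.ofFn fun i : Fin n => ξ i) ∈ A)

/-- A permutation of the Cantor set is a prefix replacement map if it is given by
a bijection between two finite complete antichains of prefixes. -/
def IsPrefixReplacement (g : Equiv.Perm Cantor) : Prop :=
  ∃ A B : Set (List Bool), IsCompleteAntichain A ∧ IsCompleteAntichain B ∧
    ∃ σ : A ≃ B, ∀ (a : A) (ξ : Cantor), g (prepend a ξ) = prepend (σ a : List Bool) ξ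

/-- The set of vertices of the tree at which `τ` fails to respect the
(colored) edge relations. -/
def qautBad (τ : Equiv.Perm (List Bool)) : Set (List Bool) :=
  {w | ∃ x : Bool, τ (w ++ [x]) ≠ (τ w) ++ [x]}

/-- The group `QAut(T_{2,c})` of quasi-automorphisms of the 2-edge-colored infinite
binary tree: permutations of the vertices respecting the edge and color relations
except at finitely many places. -/
def QAut : Subgroup (Equiv.Perm (List Bool)) where
  carrier := {τ | (qautBad τ).Finite}
  one_mem' := by
    have h : qautBad (1 : Equiv.Perm (List Bool)) = ∅ := by
      ext w; simp [qautBad]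
    simp only [Set.mem_setOf_eq, h]
    exact Set.finite_empty
  mul_mem' := by
    intro a b ha hb
    refine Set.Finite.subset (Set.Finite.union hb
      (Set.Finite.preimage b.injective.injOn ha)) ?_
    intro w hw
    obtain ⟨x, hx⟩ := hw
    by_cases h1 : w ∈ qautBad b
    · exact Or.inl h1
    · right
      simp only [Set.mem_preimage]
      simp only [qautBad, Set.mem_setOf_eq, not_exists, not_not] at h1
      refine ⟨x, fun hc => hx ?_⟩
      simp only [Equiv.Perm.coe_mul, Function.comp_apply]
      rw [h1 x, hc]
  inv_mem' := by
    intro a ha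
    refine Set.Finite.subset (ha.image a) ?_
    intro w hw
    by_contra hcon
    obtain ⟨x, hx⟩ := hw
    apply hx
    have hu : (a⁻¹ : Equiv.Perm (List Bool)) w ∉ qautBad a := by
      intro h
      exact hcon ⟨(a⁻¹ : Equiv.Perm (List Bool)) w, h, by simp⟩
    simp only [qautBad, Set.mem_setOf_eq, not_exists, not_not] at hu
    have h1 : a ((a⁻¹ : Equiv.Perm (List Bool)) w ++ [x]) = w ++ [x] := by
      rw [hu x]; simp
    calc (a⁻¹ : Equiv.Perm (List Bool)) (w ++ [x])
        = (a⁻¹ : Equiv.Perm (List Bool)) (a ((a⁻¹ : Equiv.Perm (List Bool)) w ++ [x])) := by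
          rw [h1]
      _ = (a⁻¹ : Equiv.Perm (List Bool)) w ++ [x] := by simp

/-!
The set `D ⊆ C` of eventually-`false` sequences is dense and `V`-invariant, so `V` acts faithfully
on it. Its points are `0^∞` and the sequences `w 1 0^∞`, one for each word `w`, so `D` has one point
more than the tree has vertices. To make room for that point, `w 1 0^∞` is placed at the vertex
`true :: w`, with `0^∞` at the root, and `V` is made to fix every vertex `false :: w`.

If `g` replaces the prefix `a` by `b`, it maps `a u 1 0^∞` to `b u 1 0^∞`, so on the tree it maps
`true :: (a ++ u)` to `true :: (b ++ u)`, which commutes with appending a letter. All but finitely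
many words have a prefix in a given complete antichain, so only finitely many vertices are bad.
-/

open Filter MulAction Topology
open scoped Pointwise

theorem prepend_nil (ξ : Cantor) : prepend [] ξ = ξ := rfl

@[simp]
theorem prepend_cons_zero (x : Bool) (a : List Bool) (ξ : Cantor) : prepend (x :: a) ξ 0 = x := by
  simp [prepend]

@[simp]
theorem prepend_cons_succ (x : Bool) (a : List Bool) (ξ : Cantor) (n : ℕ) :
    prepend (x :: a) ξ (n + 1) = prepend a ξ n := by
  simp [prepend]

theorem prepend_append (a b : List Bool) (ξ : Cantor) :
    prepend (a ++ b) ξ = prepend a (prepend b ξ) := by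
  induction a with
  | nil => rfl
  | cons x a ih => funext n; cases n <;> simp [ih]

theorem prepend_apply_add_length (a : List Bool) (ξ : Cantor) (n : ℕ) :
    prepend a ξ (n + a.length) = ξ n := by
  simp [prepend]

theorem prepend_ofFn (ξ : Cantor) (n : ℕ) :
    prepend (List.ofFn fun i : Fin n ↦ ξ i) (fun k ↦ ξ (k + n)) = ξ := by
  funext m
  by_cases h : m < n
  · simp [prepend, h]
  · simp [prepend, h, Nat.sub_add_cancel (not_lt.mp h)]

theorem ofFn_prepend {w : List Bool} {n : ℕ} (h : n ≤ w.length) (ξ : Cantor) :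
    (List.ofFn fun i : Fin n ↦ prepend w ξ i) = w.take n :=
  List.ext_getElem (by simpa using h) fun i hi _ ↦ by
    have : i < w.length := by grind
    simp [prepend, this]

theorem continuous_prepend (a : List Bool) : Continuous (prepend a) := by
  unfold prepend
  refine continuous_pi fun n ↦ ?_
  split_ifs <;> fun_prop

theorem IsCompleteAntichain.exists_prepend_eq {A : Set (List Bool)} (hA : IsCompleteAntichain A)
    (ξ : Cantor) : ∃ a ∈ A, ∃ η, prepend a η = ξ :=
  let ⟨n, hn⟩ := hA.2.2 ξ
  ⟨_, hn, _, prepend_ofFn ξ n⟩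

theorem IsCompleteAntichain.finite_setOf_forall_not_isPrefix {A : Set (List Bool)}
    (hA : IsCompleteAntichain A) : {w | ∀ a ∈ A, ¬ a <+: w}.Finite := by
  obtain ⟨N, hN⟩ := (hA.1.image List.length).bddAbove
  refine (List.finite_length_lt Bool N).subset fun w hw ↦ ?_
  refine lt_of_not_ge (a := w.length) fun hlen ↦ ?_
  obtain ⟨n, hn⟩ := hA.2.2 (prepend w fun _ ↦ false)
  have hnN : n ≤ N := by simpa using hN (Set.mem_image_of_mem List.length hn)
  rw [ofFn_prepend (hnN.trans hlen)] at hn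
  exact hw _ hn (List.take_prefix n w)

/-- The set `D` of sequences with finitely many entries `true`; read as binary expansions, its
points are the dyadic rationals of `[0, 1)`. -/
def eventuallyFalse : Set Cantor := {ξ | ∀ᶠ n in atTop, ξ n = false}

@[simp]
theorem prepend_mem_eventuallyFalse {a : List Bool} {ξ : Cantor} :
    prepend a ξ ∈ eventuallyFalse ↔ ξ ∈ eventuallyFalse := by
  change (∀ᶠ n in atTop, _) ↔ ∀ᶠ n in atTop, _
  conv_lhs => rw [← map_add_atTop_eq_nat a.length, eventually_map]
  simp only [prepend_apply_add_length]

theorem dense_eventuallyFalse : Dense eventuallyFalse := by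
  intro ξ
  let truncate (N n : ℕ) : Bool := if n < N then ξ n else false
  have mem (N : ℕ) : truncate N ∈ eventuallyFalse :=
    (eventually_ge_atTop N).mono fun n hn ↦ by simp [truncate, hn.not_gt]
  have lim : Tendsto truncate atTop (𝓝 ξ) := tendsto_pi_nhds.2 fun n ↦
    tendsto_const_nhds.congr' <| (eventually_gt_atTop n).mono fun N hN ↦ by simp [truncate, hN]
  exact mem_closure_of_tendsto lim (.of_forall mem)

theorem IsPrefixReplacement.mem_stabilizer {g : Equiv.Perm Cantor} (hg : IsPrefixReplacement g) :
    g ∈ stabilizer (Equiv.Perm Cantor) eventuallyFalse := by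
  obtain ⟨A, _, hA, _, σ, hσ⟩ := hg
  refine mem_stabilizer_set.2 fun ξ ↦ ?_
  obtain ⟨a, ha, η, rfl⟩ := hA.exists_prepend_eq ξ
  rw [Equiv.Perm.smul_def, hσ ⟨a, ha⟩]
  simp only [prepend_mem_eventuallyFalse]

theorem IsPrefixReplacement.eq_one_of_eqOn {g : Equiv.Perm Cantor} (hg : IsPrefixReplacement g)
    (h : Set.EqOn g id eventuallyFalse) : g = 1 := by
  obtain ⟨A, _, hA, _, σ, hσ⟩ := hg
  ext1 ξ
  obtain ⟨a, ha, η, rfl⟩ := hA.exists_prepend_eq ξ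
  have key : prepend (σ ⟨a, ha⟩) = prepend a :=
    (continuous_prepend _).ext_on dense_eventuallyFalse (continuous_prepend _) fun ζ hζ ↦
      (hσ ⟨a, ha⟩ ζ).symm.trans (h (prepend_mem_eventuallyFalse.2 hζ))
  rw [hσ ⟨a, ha⟩, key, Equiv.Perm.one_apply]

/-- The sequence `0^∞`. -/
def zeroPoint : Cantor := fun _ ↦ false

/-- The sequence `w 1 0^∞`. -/
def dyadicPoint (w : List Bool) : Cantor := prepend (w ++ [true]) zeroPoint

theorem zeroPoint_mem_eventuallyFalse : zeroPoint ∈ eventuallyFalse := .of_forall fun _ ↦ rfl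

theorem dyadicPoint_mem_eventuallyFalse (w : List Bool) : dyadicPoint w ∈ eventuallyFalse :=
  prepend_mem_eventuallyFalse.2 zeroPoint_mem_eventuallyFalse

theorem dyadicPoint_append (a u : List Bool) :
    dyadicPoint (a ++ u) = prepend a (dyadicPoint u) := by
  simp only [dyadicPoint, List.append_assoc, prepend_append]

theorem dyadicPoint_apply_length (w : List Bool) : dyadicPoint w w.length = true := by
  simp [dyadicPoint, prepend]

theorem dyadicPoint_ne_zeroPoint (w : List Bool) : dyadicPoint w ≠ zeroPoint := fun h ↦
  Bool.noConfusion ((dyadicPoint_apply_length w).symm.trans (congrFun h _))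

theorem dyadicPoint_injective : Function.Injective dyadicPoint := by
  intro v
  induction v with
  | nil =>
    rintro (_ | ⟨y, w⟩) h
    · rfl
    · have tail : zeroPoint = dyadicPoint w := funext fun n ↦ by
        simpa [dyadicPoint, prepend_nil] using congrFun h (n + 1)
      exact absurd tail.symm (dyadicPoint_ne_zeroPoint w)
  | cons x v ih =>
    rintro (_ | ⟨y, w⟩) h
    · have tail : dyadicPoint v = zeroPoint := funext fun n ↦ by
        simpa [dyadicPoint, prepend_nil] using congrFun h (n + 1)
      exact absurd tail (dyadicPoint_ne_zeroPoint v)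
    · have head : x = y := by simpa [dyadicPoint] using congrFun h 0
      have tail : dyadicPoint v = dyadicPoint w := funext fun n ↦ by
        simpa [dyadicPoint] using congrFun h (n + 1)
      rw [head, ih tail]

theorem eq_zeroPoint_or_exists_dyadicPoint_eq {ξ : Cantor} (hξ : ξ ∈ eventuallyFalse) :
    ξ = zeroPoint ∨ ∃ w, dyadicPoint w = ξ := by
  obtain ⟨N, hN⟩ := eventually_atTop.1 hξ
  induction N with
  | zero => exact .inl (funext fun n ↦ hN n n.zero_le)
  | succ N ih =>
    by_cases hξN : ξ N = true
    · have tail : prepend [true] zeroPoint = fun k ↦ ξ (k + N) := funext fun k ↦ by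
        cases k with
        | zero => simp [hξN]
        | succ k => simpa [prepend_nil, zeroPoint] using (hN (k + 1 + N) (by lia)).symm
      exact .inr ⟨_, (prepend_append _ _ _).trans (tail ▸ prepend_ofFn ξ N)⟩
    · refine ih fun n hn ↦ ?_
      obtain rfl | hlt := hn.eq_or_lt
      · exact Bool.eq_false_of_not_eq_true hξN
      · exact hN n hlt

/-- The enumeration of `D` by words, with `none` standing for the extra point `0^∞`. -/
def eventuallyFalseOfOption : Option (List Bool) → eventuallyFalse
  | none => ⟨zeroPoint, zeroPoint_mem_eventuallyFalse⟩
  | some w => ⟨dyadicPoint w, dyadicPoint_mem_eventuallyFalse w⟩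

theorem eventuallyFalseOfOption_bijective : Function.Bijective eventuallyFalseOfOption := by
  constructor
  · rintro (_ | v) (_ | w) h
    · rfl
    · exact absurd (congrArg Subtype.val h).symm (dyadicPoint_ne_zeroPoint w)
    · exact absurd (congrArg Subtype.val h) (dyadicPoint_ne_zeroPoint v)
    · exact congrArg some (dyadicPoint_injective (congrArg Subtype.val h))
  · rintro ⟨ξ, hξ⟩
    obtain rfl | ⟨w, rfl⟩ := eq_zeroPoint_or_exists_dyadicPoint_eq hξ
    · exact ⟨none, rfl⟩
    · exact ⟨some w, rfl⟩

/-- The embedding of `D` into the vertex set of the tree: `0^∞` goes to the root and `w 1 0^∞` to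
`true :: w`. -/
noncomputable def vertexEmbedding : eventuallyFalse ↪ List Bool :=
  (Equiv.ofBijective _ eventuallyFalseOfOption_bijective).symm.toEmbedding.trans
    ⟨fun o ↦ o.elim [] (List.cons true), by rintro (_ | v) (_ | w) <;> simp⟩

theorem vertexEmbedding_eventuallyFalseOfOption (o : Option (List Bool)) :
    vertexEmbedding (eventuallyFalseOfOption o) = o.elim [] (List.cons true) :=
  congrArg (Option.elim · [] (List.cons true)) (Equiv.ofBijective_symm_apply_apply _ _ o)

theorem false_cons_notMem_range_vertexEmbedding (w : List Bool) :
    false :: w ∉ Set.range vertexEmbedding := by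
  rintro ⟨ξ, hξ⟩
  obtain ⟨_ | v, rfl⟩ := eventuallyFalseOfOption_bijective.surjective ξ <;>
    simp [vertexEmbedding_eventuallyFalseOfOption] at hξ

/-- The action on the vertices of the tree induced by the action on `D`, fixing every vertex outside
the range of `vertexEmbedding`. -/
noncomputable def vertexAction :
    stabilizer (Equiv.Perm Cantor) eventuallyFalse →* Equiv.Perm (List Bool) :=
  (Equiv.Perm.viaEmbeddingHom vertexEmbedding).comp (toPermHom _ eventuallyFalse)

theorem vertexAction_false_cons (g : stabilizer (Equiv.Perm Cantor) eventuallyFalse)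
    (w : List Bool) : vertexAction g (false :: w) = false :: w :=
  Equiv.Perm.viaEmbedding_apply_of_notMem _ _ _ (false_cons_notMem_range_vertexEmbedding w)

theorem vertexAction_true_cons {g : stabilizer (Equiv.Perm Cantor) eventuallyFalse}
    {v w : List Bool} (h : g.1 (dyadicPoint v) = dyadicPoint w) :
    vertexAction g (true :: v) = true :: w := by
  have hsmul : g • eventuallyFalseOfOption (some v) = eventuallyFalseOfOption (some w) :=
    Subtype.ext h
  calc vertexAction g (true :: v)
      = vertexAction g (vertexEmbedding (eventuallyFalseOfOption (some v))) := by
        rw [vertexEmbedding_eventuallyFalseOfOption, Option.elim_some]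
    _ = vertexEmbedding (g • eventuallyFalseOfOption (some v)) :=
        Equiv.Perm.viaEmbedding_apply _ _ _
    _ = true :: w := by
        rw [hsmul, vertexEmbedding_eventuallyFalseOfOption, Option.elim_some]

theorem eqOn_id_of_vertexAction_eq_one {g : stabilizer (Equiv.Perm Cantor) eventuallyFalse}
    (hg : vertexAction g = 1) : Set.EqOn g.1 id eventuallyFalse := by
  have hperm : toPermHom _ eventuallyFalse g = 1 :=
    Equiv.Perm.viaEmbeddingHom_injective vertexEmbedding (hg.trans (map_one _).symm)
  exact fun ξ hξ ↦ congrArg Subtype.val (Equiv.ext_iff.1 hperm ⟨ξ, hξ⟩)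

theorem vertexAction_mem_QAut {g : stabilizer (Equiv.Perm Cantor) eventuallyFalse}
    (hg : IsPrefixReplacement g.1) : vertexAction g ∈ QAut := by
  obtain ⟨A, _, hA, _, σ, hσ⟩ := hg
  have map_cone (a : A) (u : List Bool) :
      vertexAction g (true :: (a ++ u)) = true :: (σ a ++ u) :=
    vertexAction_true_cons (by rw [dyadicPoint_append, hσ, dyadicPoint_append])
  refine ((hA.finite_setOf_forall_not_isPrefix.image (List.cons true)).insert []).subset ?_
  rintro (_ | ⟨_ | _, w⟩) ⟨x, hx⟩
  · exact .inl rfl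
  · simp [vertexAction_false_cons] at hx
  · refine .inr ⟨w, ?_, rfl⟩
    rintro a ha ⟨u, rfl⟩
    simp [map_cone ⟨a, ha⟩] at hx

/-- Thompson's group `V` (the group of prefix replacement permutations of the
Cantor set) embeds into `QAut(T_{2,c})`. -/
theorem V_embeds_in_qaut (V : Subgroup (Equiv.Perm Cantor))
    (hV : ∀ g : Equiv.Perm Cantor, g ∈ V ↔ IsPrefixReplacement g) :
    ∃ φ : V →* QAut, Function.Injective φ := by
  have hprefix (g : V) : IsPrefixReplacement g.1 := (hV g).1 g.2
  have hle : V ≤ stabilizer (Equiv.Perm Cantor) eventuallyFalse :=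
    fun g hg ↦ (hprefix ⟨g, hg⟩).mem_stabilizer
  let φ : V →* QAut := (vertexAction.comp (Subgroup.inclusion hle)).codRestrict QAut
    fun g ↦ vertexAction_mem_QAut (hprefix g)
  refine ⟨φ, (injective_iff_map_eq_one φ).2 fun g hg ↦ Subtype.ext ?_⟩
  exact (hprefix g).eq_one_of_eqOn (eqOn_id_of_vertexAction_eq_one (congrArg Subtype.val hg))
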